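/- arXiv:2101.03033 — 5 statements merged into one kernel-verified Lean document; each statement's English description precedes it below -/
import Mathlib

section
/- An incomplete symmetric matrix A is Strong-Robinsonian if and only if A has a Robinsonian completion, i.e., there exists a complete symmetric matrix B agreeing with A on all non-missing entries of A such that B is Robinsonian. -/
/-- An incomplete matrix (entries in `Option ℝ`, `none` = missing) is symmetric. -/
def IsSymmetricOpt {n : ℕ} (A : Fin n → Fin n → Option ℝ) : Prop :=
  ∀ i j, A j i = A i j

/-- Incomplete Robinson: non-missing entries do not decrease along rows and
columns when moving toward the main diagonal. -/
def IsRobinsonOpt {n : ℕ} (A : Fin n → Fin n → Option ℝ) : Prop :=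
  (∀ i k j : Fin n, i ≤ k → k ≤ j →
    ∀ x y : ℝ, A i j = some x → A i k = some y → x ≤ y) ∧
  (∀ i l j : Fin n, i ≤ l → l ≤ j →
    ∀ x y : ℝ, A i j = some x → A l j = some y → x ≤ y)

/-- Incomplete Strong-Robinson: `a_{i,j} ≤ a_{k,l}` whenever
`i ≤ k ≤ l ≤ j` and both entries are non-missing. -/
def IsStrongRobinsonOpt {n : ℕ} (A : Fin n → Fin n → Option ℝ) : Prop :=
  ∀ i k l j : Fin n, i ≤ k → k ≤ l → l ≤ j →
    ∀ x y : ℝ, A i j = some x → A k l = some y → x ≤ y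

/-- Incomplete Robinsonian: some simultaneous permutation of rows and columns is Robinson. -/
def IsRobinsonianOpt {n : ℕ} (A : Fin n → Fin n → Option ℝ) : Prop :=
  ∃ π : Equiv.Perm (Fin n), IsRobinsonOpt (fun i j => A (π i) (π j))

/-- Incomplete Strong-Robinsonian. -/
def IsStrongRobinsonianOpt {n : ℕ} (A : Fin n → Fin n → Option ℝ) : Prop :=
  ∃ π : Equiv.Perm (Fin n), IsStrongRobinsonOpt (fun i j => A (π i) (π j))

/-- Complete Robinson matrix. -/
def IsRobinson {n : ℕ} (B : Fin n → Fin n → ℝ) : Prop :=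
  (∀ i k j : Fin n, i ≤ k → k ≤ j → B i j ≤ B i k) ∧
  (∀ i l j : Fin n, i ≤ l → l ≤ j → B i j ≤ B l j)

/-- Complete Robinsonian matrix. -/
def IsRobinsonian {n : ℕ} (B : Fin n → Fin n → ℝ) : Prop :=
  ∃ π : Equiv.Perm (Fin n), IsRobinson (fun i j => B (π i) (π j))

/-- `B` is a (symmetric) completion of the incomplete matrix `A`. -/
def IsCompletion {n : ℕ} (A : Fin n → Fin n → Option ℝ) (B : Fin n → Fin n → ℝ) : Prop :=
  (∀ i j, B j i = B i j) ∧ ∀ i j (x : ℝ), A i j = some x → B i j = x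

/-- `w(A)`: the set of values appearing among the non-missing entries of `A`. -/
def valueSet {n : ℕ} (A : Fin n → Fin n → Option ℝ) : Set ℝ :=
  {x | ∃ i j, A i j = some x}

/-- An incomplete symmetric matrix is Strong-Robinsonian iff it has a Robinsonian completion. -/
theorem stmt0 {n : ℕ} (A : Fin n → Fin n → Option ℝ) (hA : IsSymmetricOpt A) :
    IsStrongRobinsonianOpt A ↔
      ∃ B : Fin n → Fin n → ℝ, IsCompletion A B ∧ IsRobinsonian B := by
  classical
  constructor
  · rintro ⟨π, hπ⟩
    have hfin : (valueSet A).Finite := by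
      have h : valueSet A ⊆ Set.range (fun p : Fin n × Fin n => (A p.1 p.2).getD 0) := by
        rintro x ⟨i, j, h⟩
        exact ⟨(i, j), by simp [h]⟩
      exact (Set.finite_range _).subset h
    obtain ⟨M, hM⟩ := hfin.bddAbove
    obtain ⟨m, hm⟩ := hfin.bddBelow
    let S : Fin n → Fin n → Set ℝ := fun a b =>
      insert m {x | ∃ i j, i ≤ a ∧ b ≤ j ∧ A (π i) (π j) = some x}
    have hbdd : ∀ a b, BddAbove (S a b) := by
      intro a b
      refine ⟨max m M, ?_⟩
      rintro x (rfl | ⟨i, j, _, _, h⟩)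
      · exact le_max_left _ _
      · exact (hM ⟨_, _, h⟩).trans (le_max_right _ _)
    have hne : ∀ a b, (S a b).Nonempty := fun a b => ⟨m, Or.inl rfl⟩
    have hmono : ∀ a b c d, a ≤ c → d ≤ b → sSup (S a b) ≤ sSup (S c d) := by
      intro a b c d hac hdb
      apply csSup_le_csSup (hbdd c d) (hne a b)
      rintro x (rfl | ⟨i, j, hi, hj, h⟩)
      · exact Or.inl rfl
      · exact Or.inr ⟨i, j, hi.trans hac, hdb.trans hj, h⟩
    have hval : ∀ a b x, a ≤ b → A (π a) (π b) = some x → sSup (S a b) = x := by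
      intro a b x hab h
      apply le_antisymm
      · apply csSup_le (hne a b)
        rintro y (rfl | ⟨i, j, hi, hj, hy⟩)
        · exact hm ⟨_, _, h⟩
        · exact hπ i a b j hi hab hj y x hy h
      · exact le_csSup (hbdd a b) (Or.inr ⟨a, b, le_rfl, le_rfl, h⟩)
    refine ⟨fun i j => sSup (S (min (π.symm i) (π.symm j)) (max (π.symm i) (π.symm j))),
      ⟨?_, ?_⟩, π, ?_, ?_⟩
    · intro i j
      simp only [min_comm, max_comm]
    · intro i j x h
      apply hval _ _ _ min_le_max
      rcases le_total (π.symm i) (π.symm j) with h1 | h1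
      · simpa [h1] using h
      · rw [min_eq_right h1, max_eq_left h1]
        simpa [hA i j] using h
    · intro i k j h1 h2
      simp only [Equiv.symm_apply_apply, min_eq_left h1, max_eq_right h1,
        min_eq_left (h1.trans h2), max_eq_right (h1.trans h2)]
      exact hmono _ _ _ _ le_rfl h2
    · intro i k j h1 h2
      simp only [Equiv.symm_apply_apply, min_eq_left h2, max_eq_right h2,
        min_eq_left (h1.trans h2), max_eq_right (h1.trans h2)]
      exact hmono _ _ _ _ h1 le_rfl
  · rintro ⟨B, ⟨_, hB⟩, π, h1, h2⟩
    refine ⟨π, ?_⟩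
    intro i k l j hik hkl hlj x y hx hy
    rw [← hB _ _ _ hx, ← hB _ _ _ hy]
    exact (h1 i l j (hik.trans hkl) hlj).trans (h2 i k l hik hkl)
end

section
/- There exists an incomplete symmetric matrix that is Robinsonian but is not Strong-Robinsonian. -/
/-- The example, with natural-number values; `none` is a missing entry. -/
def exM : Fin 5 → Fin 5 → Option ℕ :=
  ![![none, some 1, some 1, none, some 1],
    ![some 1, some 3, some 3, some 0, none],
    ![some 1, some 3, some 3, some 3, some 2],
    ![none, some 0, some 3, some 3, some 3],
    ![some 1, none, some 2, some 3, none]]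

/-- `u ≤ v` for optional naturals whenever both are present. -/
def optLe (u v : Option ℕ) : Bool :=
  match u, v with
  | some x, some y => decide (x ≤ y)
  | _, _ => true

theorem optLe_iff (u v : Option ℕ) : optLe u v = true ↔
    ∀ x y : ℝ, u.map (fun m : ℕ => (m : ℝ)) = some x →
      v.map (fun m : ℕ => (m : ℝ)) = some y → x ≤ y := by
  cases u <;> cases v <;> simp [optLe]

theorem exM_rob : (∀ i k j : Fin 5, i ≤ k → k ≤ j → optLe (exM i j) (exM i k) = true) ∧
    (∀ i l j : Fin 5, i ≤ l → l ≤ j → optLe (exM i j) (exM l j) = true) := by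
  decide +kernel

theorem exM_not_strong : ∀ π : Equiv.Perm (Fin 5), ¬ ∀ i k l j : Fin 5, i ≤ k → k ≤ l → l ≤ j →
    optLe (exM (π i) (π j)) (exM (π k) (π l)) = true := by
  decide +kernel

/-- There is an incomplete symmetric matrix that is Robinsonian but not Strong-Robinsonian. -/
theorem stmt2 : ∃ (n : ℕ) (A : Fin n → Fin n → Option ℝ),
    IsSymmetricOpt A ∧ IsRobinsonianOpt A ∧ ¬ IsStrongRobinsonianOpt A := by
  refine ⟨5, fun i j => (exM i j).map (fun m : ℕ => (m : ℝ)), ?_, ⟨1, ?_, ?_⟩, ?_⟩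
  · have h : ∀ i j, exM j i = exM i j := by decide +kernel
    intro i j
    simp only [h i j]
  · intro i k j h1 h2
    exact (optLe_iff _ _).1 (exM_rob.1 i k j h1 h2)
  · intro i l j h1 h2
    exact (optLe_iff _ _).1 (exM_rob.2 i l j h1 h2)
  · rintro ⟨π, h⟩
    exact exM_not_strong π fun i k l j h1 h2 h3 => (optLe_iff _ _).2 (h i k l j h1 h2 h3)
end

section
/- Every incomplete Strong-Robinson symmetric matrix A with at least one non-missing entry has a Robinson completion all of whose added values belong to w(A); in particular, the completion obtained by setting every missing diagonal entry to max w(A) and then, proceeding by increasing distance j−i from the diagonal, setting each missing entry a_{i,j} with i < j to min(a_{i,j-1}, a_{i+1,j}), is a Robinson matrix. -/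
/-- Every incomplete Strong-Robinson symmetric matrix with at least one non-missing entry
has a Robinson completion in `w(A)`; in particular the completion filling missing diagonal
entries with `max w(A)` and, moving away from the diagonal, each missing `a_{i,j}` (`i < j`)
with `min (a_{i,j-1}, a_{i+1,j})`, is Robinson. -/
theorem stmt7 {n : ℕ} (A : Fin n → Fin n → Option ℝ) (hAsym : IsSymmetricOpt A)
    (hSR : IsStrongRobinsonOpt A) (hne : ∃ i j x, A i j = some x) :
    ∃ B : Fin n → Fin n → ℝ,
      IsCompletion A B ∧
      (∀ i j, A i j = none → B i j ∈ valueSet A) ∧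
      IsRobinson B ∧
      (∀ i, A i i = none → B i i = sSup (valueSet A)) ∧
      (∀ (i j : Fin n) (h : i < j), A i j = none →
        B i j = min (B i ⟨j.val - 1, Nat.lt_of_le_of_lt (Nat.sub_le _ _) j.isLt⟩)
                    (B ⟨i.val + 1, Nat.lt_of_le_of_lt h j.isLt⟩ j)) := by
  classical
  have hfin : (valueSet A).Finite := by
    have h1 : (Set.range (fun p : Fin n × Fin n => (A p.1 p.2).getD 0)).Finite :=
      Set.finite_range _
    refine h1.subset ?_
    rintro x ⟨i, j, h⟩
    exact ⟨(i, j), by simp [h]⟩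
  have hnon : (valueSet A).Nonempty := by
    obtain ⟨i, j, x, h⟩ := hne
    exact ⟨x, i, j, h⟩
  obtain ⟨M, hM⟩ : ∃ M, M = sSup (valueSet A) := ⟨_, rfl⟩
  have hMmem : M ∈ valueSet A := hM ▸ hnon.csSup_mem hfin
  have hMle : ∀ x ∈ valueSet A, x ≤ M := fun x hx => hM ▸ le_csSup hfin.bddAbove hx
  obtain ⟨g, hg⟩ : ∃ g : Fin n × Fin n → ℝ, g = fun p => (A p.1 p.2).getD M := ⟨_, rfl⟩
  have gsome : ∀ i j x, A i j = some x → g (i, j) = x := by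
    intro i j x h; simp [hg, h]
  have gnone : ∀ i j, A i j = none → g (i, j) = M := by
    intro i j h; simp [hg, h]
  have gmem : ∀ p, g p ∈ valueSet A := by
    rintro ⟨i, j⟩
    cases h : A i j with
    | none => rw [gnone i j h]; exact hMmem
    | some x => rw [gsome i j x h]; exact ⟨i, j, h⟩
  have hnep : ∀ i j : Fin n, (Finset.uIcc i j ×ˢ Finset.uIcc i j).Nonempty := fun i j =>
    ⟨(i, j), by simp⟩
  obtain ⟨B, hB⟩ : ∃ B : Fin n → Fin n → ℝ, B = fun i j =>
      (Finset.uIcc i j ×ˢ Finset.uIcc i j).inf' (hnep i j) g := ⟨_, rfl⟩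
  have leB : ∀ i j c, c ≤ B i j ↔ ∀ k ∈ Finset.uIcc i j, ∀ l ∈ Finset.uIcc i j, c ≤ g (k, l) := by
    intro i j c
    simp only [hB, Finset.le_inf'_iff, Prod.forall, Finset.mem_product]
    exact ⟨fun h k hk l hl => h k l ⟨hk, hl⟩, fun h k l hkl => h k hkl.1 l hkl.2⟩
  have Ble : ∀ i j, ∀ k ∈ Finset.uIcc i j, ∀ l ∈ Finset.uIcc i j, B i j ≤ g (k, l) :=
    fun i j => (leB i j _).1 le_rfl
  have Bmem : ∀ i j, B i j ∈ valueSet A := by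
    intro i j
    obtain ⟨p, -, hp⟩ := Finset.exists_mem_eq_inf' (hnep i j) g
    have : B i j = g p := by rw [← hp, hB]
    rw [this]; exact gmem p
  have Bmono : ∀ i j ii jj, Finset.uIcc ii jj ⊆ Finset.uIcc i j → B i j ≤ B ii jj := by
    intro i j ii jj h
    exact (leB _ _ _).2 fun k hk l hl => Ble i j k (h hk) l (h hl)
  have Bsymm : ∀ i j, B j i = B i j := fun i j =>
    le_antisymm (Bmono _ _ _ _ (by rw [Finset.uIcc_comm])) (Bmono _ _ _ _ (by rw [Finset.uIcc_comm]))
  have gsymm : ∀ i j, g (j, i) = g (i, j) := by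
    intro i j; simp [hg, hAsym i j]
  have key : ∀ i j x, i ≤ j → A i j = some x → x ≤ B i j := by
    intro i j x hij hx
    refine (leB _ _ _).2 fun k hk l hl => ?_
    rw [Finset.uIcc_of_le hij, Finset.mem_Icc] at hk hl
    have aux : ∀ k l : Fin n, i ≤ k → k ≤ l → l ≤ j → x ≤ g (k, l) := by
      intro k l h1 h2 h3
      cases h : A k l with
      | none => rw [gnone k l h]; exact hMle x ⟨i, j, hx⟩
      | some y => rw [gsome k l y h]; exact hSR i k l j h1 h2 h3 x y hx h
    rcases le_total k l with h | h
    · exact aux k l hk.1 h hl.2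
    · rw [gsymm l k]; exact aux l k hl.1 h hk.2
  refine ⟨B, ⟨Bsymm, ?_⟩, fun i j _ => Bmem i j, ⟨?_, ?_⟩, ?_, ?_⟩
  · intro i j x hx
    apply le_antisymm
    · rw [← gsome i j x hx]
      exact Ble i j i Finset.left_mem_uIcc j Finset.right_mem_uIcc
    · rcases le_total i j with h | h
      · exact key i j x h hx
      · rw [Bsymm j i]; exact key j i x h (by rw [hAsym i j]; exact hx)
  · intro i k j h1 h2
    apply Bmono
    rw [Finset.uIcc_of_le h1, Finset.uIcc_of_le (h1.trans h2)]
    exact Finset.Icc_subset_Icc le_rfl h2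
  · intro i l j h1 h2
    apply Bmono
    rw [Finset.uIcc_of_le h2, Finset.uIcc_of_le (h1.trans h2)]
    exact Finset.Icc_subset_Icc h1 le_rfl
  · intro i hi
    rw [← hM]
    refine le_antisymm (hMle _ (Bmem i i)) ((leB _ _ _).2 fun k hk l hl => ?_)
    simp only [Finset.uIcc_self, Finset.mem_singleton] at hk hl
    rw [hk, hl, gnone i i hi]
  · intro i j h hij
    have hlt : i.val < j.val := h
    obtain ⟨jj, hjj⟩ : ∃ jj : Fin n, jj = ⟨j.val - 1, Nat.lt_of_le_of_lt (Nat.sub_le _ _) j.isLt⟩ :=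
      ⟨_, rfl⟩
    obtain ⟨ii, hii⟩ : ∃ ii : Fin n, ii = ⟨i.val + 1, Nat.lt_of_le_of_lt h j.isLt⟩ := ⟨_, rfl⟩
    rw [← hjj, ← hii]
    have vj : jj.val = j.val - 1 := by rw [hjj]
    have vi : ii.val = i.val + 1 := by rw [hii]
    have e1 : i ≤ jj := by rw [Fin.le_def]; omega
    have e2 : jj ≤ j := by rw [Fin.le_def]; omega
    have e3 : ii ≤ j := by rw [Fin.le_def]; omega
    have e4 : i ≤ ii := by rw [Fin.le_def]; omega
    have hle : i ≤ j := h.le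
    apply le_antisymm
    · apply le_min
      · apply Bmono
        rw [Finset.uIcc_of_le e1, Finset.uIcc_of_le hle]
        exact Finset.Icc_subset_Icc le_rfl e2
      · apply Bmono
        rw [Finset.uIcc_of_le e3, Finset.uIcc_of_le hle]
        exact Finset.Icc_subset_Icc e4 le_rfl
    · refine (leB _ _ _).2 fun k hk l hl => ?_
      rw [Finset.uIcc_of_le hle, Finset.mem_Icc] at hk hl
      by_cases c1 : k ≤ jj ∧ l ≤ jj
      · refine (min_le_left _ _).trans (Ble _ _ _ ?_ _ ?_) <;>
          rw [Finset.uIcc_of_le e1, Finset.mem_Icc]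
        exacts [⟨hk.1, c1.1⟩, ⟨hl.1, c1.2⟩]
      by_cases c2 : ii ≤ k ∧ ii ≤ l
      · refine (min_le_right _ _).trans (Ble _ _ _ ?_ _ ?_) <;>
          rw [Finset.uIcc_of_le e3, Finset.mem_Icc]
        exacts [⟨c2.1, hk.2⟩, ⟨c2.2, hl.2⟩]
      have hgM : g (k, l) = M := by
        simp only [Fin.le_def] at hk hl c1 c2
        have : (k = i ∧ l = j) ∨ (k = j ∧ l = i) := by
          simp only [Fin.ext_iff]; omega
        rcases this with ⟨rfl, rfl⟩ | ⟨rfl, rfl⟩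
        · exact gnone _ _ hij
        · rw [gsymm]; exact gnone _ _ hij
      rw [hgM]
      exact (min_le_left _ _).trans (hMle _ (Bmem _ _))
end

section
/- The incomplete symmetric 6×6 matrix A with rows (1,1,0,0,0,0), (1,1,1,*,1,0), (0,1,1,0,*,0), (0,*,0,1,1,0), (0,1,*,1,1,1), (0,0,0,0,1,1), where * denotes a missing entry, is not Strong-Robinsonian: no permutation π of {1,…,6} makes the matrix with entries a_{π(i),π(j)} Strong-Robinson. -/
/-- The incomplete symmetric 6×6 matrix from the paper (`none` denotes a missing entry). -/
def Aex : Fin 6 → Fin 6 → Option ℝ :=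
  ![![some 1, some 1, some 0, some 0, some 0, some 0],
    ![some 1, some 1, some 1, none,   some 1, some 0],
    ![some 0, some 1, some 1, some 0, none,   some 0],
    ![some 0, none,   some 0, some 1, some 1, some 0],
    ![some 0, some 1, none,   some 1, some 1, some 1],
    ![some 0, some 0, some 0, some 0, some 1, some 1]]

/-- There is no placement on a line with `1` to the left of `4`. -/
lemma no_placement (p : Fin 6 → ℤ) (hp : Function.Injective p)
    (K : ∀ a b c d : Fin 6, Aex a b = some 1 → Aex c d = some 0 →
      ¬ (p a ≤ p c ∧ p c ≤ p d ∧ p d ≤ p b)) (h14 : p 1 < p 4) : False := by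
  have ne : ∀ a b : Fin 6, a ≠ b → p a ≠ p b := fun a b h e => h (hp e)
  have n01 := ne 0 1 (by decide)
  have n45 := ne 4 5 (by decide)
  have n21 := ne 2 1 (by decide)
  have n24 := ne 2 4 (by decide)
  have n31 := ne 3 1 (by decide)
  have n34 := ne 3 4 (by decide)
  have h0 : p 0 < p 1 := by
    have := K 1 4 0 4 rfl rfl
    have := K 1 0 4 0 rfl rfl
    omega
  have h5 : p 4 < p 5 := by
    have := K 1 4 1 5 rfl rfl
    have := K 5 4 5 1 rfl rfl
    omega
  have h2 : p 1 < p 2 := by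
    have := K 0 1 0 2 rfl rfl
    have := K 2 1 2 0 rfl rfl
    omega
  have h3 : p 3 < p 4 := by
    have := K 4 5 3 5 rfl rfl
    have := K 4 3 5 3 rfl rfl
    omega
  have h2' : p 2 < p 4 := by
    have := K 4 5 2 5 rfl rfl
    have := K 1 2 1 5 rfl rfl
    omega
  have h3' : p 1 < p 3 := by
    have := K 0 1 0 3 rfl rfl
    have := K 3 4 0 4 rfl rfl
    omega
  have := K 1 4 2 3 rfl rfl
  have := K 1 4 3 2 rfl rfl
  omega

lemma Aex_symm (i j : Fin 6) : Aex j i = Aex i j := by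
  fin_cases i <;> fin_cases j <;> rfl

/-- The matrix `Aex` is not Strong-Robinsonian. -/
theorem stmt9 : ¬ IsStrongRobinsonianOpt Aex := by
  rintro ⟨π, h⟩
  have K : ∀ a b c d : Fin 6, Aex a b = some 1 → Aex c d = some 0 →
      ¬ (π.symm a ≤ π.symm c ∧ π.symm c ≤ π.symm d ∧ π.symm d ≤ π.symm b) := by
    rintro a b c d hab hcd ⟨h1, h2, h3⟩
    have := h _ _ _ _ h1 h2 h3 1 0 (by simpa using hab) (by simpa using hcd)
    norm_num at this
  have inj : Function.Injective (fun a : Fin 6 => ((π.symm a : ℕ) : ℤ)) := by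
    intro a b e
    have e' : (π.symm a : ℕ) = (π.symm b : ℕ) := by
      simpa using congrArg Int.toNat e
    exact π.symm.injective (Fin.ext e')
  rcases lt_trichotomy (π.symm 1) (π.symm 4) with h14 | h14 | h14
  · refine no_placement _ inj ?_ (by exact_mod_cast h14)
    intro a b c d hab hcd hh
    exact K a b c d hab hcd (by simpa using hh)
  · exact absurd (π.symm.injective h14) (by decide)
  · refine no_placement (fun a => -((π.symm a : ℕ) : ℤ)) (fun a b e => inj (neg_injective e)) ?_ ?_
    · rintro a b c d hab hcd ⟨h1, h2, h3⟩
      refine K b a d c (by rw [Aex_symm, hab]) (by rw [Aex_symm, hcd]) ?_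
      simp only [Fin.le_def]
      omega
    · rw [Fin.lt_def] at h14
      omega
end

section
/- A 0-1 incomplete symmetric matrix A (all non-missing entries equal to 0 or 1) is Strong-Robinsonian if and only if A has a Robinsonian completion with values in {0,1}. -/
/-- A 0-1 incomplete symmetric matrix is Strong-Robinsonian iff it has a
Robinsonian completion with values in `{0,1}`. -/
theorem stmt13 {n : ℕ} (A : Fin n → Fin n → Option ℝ) (hA : IsSymmetricOpt A)
    (h01 : ∀ i j (x : ℝ), A i j = some x → x = 0 ∨ x = 1) :
    IsStrongRobinsonianOpt A ↔
      ∃ B : Fin n → Fin n → ℝ, IsCompletion A B ∧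
        (∀ i j, A i j = none → B i j ∈ ({0, 1} : Set ℝ)) ∧ IsRobinsonian B := by
  classical
  constructor
  · rintro ⟨π, hπ⟩
    let P : Fin n → Fin n → Prop := fun a b =>
      ∃ i j, i ≤ a ∧ i ≤ b ∧ a ≤ j ∧ b ≤ j ∧ A (π i) (π j) = some 1
    have hP : ∀ a b, P a b ↔ P b a := by
      intro a b
      constructor <;> rintro ⟨i, j, h1, h2, h3, h4, h5⟩ <;> exact ⟨i, j, h2, h1, h4, h3, h5⟩
    -- key fact: `P` agrees with `A` on non-missing entries
    have key : ∀ a b, a ≤ b → ∀ x, A (π a) (π b) = some x → (if P a b then (1 : ℝ) else 0) = x := by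
      intro a b hab x hx
      by_cases h : P a b
      · rw [if_pos h]
        obtain ⟨i, j, h1, h2, h3, h4, h5⟩ := h
        have h6 := hπ i a b j h1 hab h4 1 x h5 hx
        rcases h01 _ _ x hx with h | h <;> linarith
      · rw [if_neg h]
        rcases h01 _ _ x hx with h' | h'
        · exact h'.symm
        · exact absurd ⟨a, b, le_refl a, hab, hab, le_refl b, h' ▸ hx⟩ h
    have mono : ∀ a b c d, (P a b → P c d) →
        (if P a b then (1 : ℝ) else 0) ≤ (if P c d then (1 : ℝ) else 0) := by
      intro a b c d h
      by_cases h1 : P a b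
      · rw [if_pos h1, if_pos (h h1)]
      · rw [if_neg h1]; split_ifs <;> norm_num
    refine ⟨fun a b => if P (π.symm a) (π.symm b) then 1 else 0, ⟨?_, ?_⟩, ?_, π, ?_, ?_⟩
    · intro i j
      simp only [hP (π.symm i) (π.symm j)]
    · intro i j x hx
      rcases le_total (π.symm i) (π.symm j) with h | h
      · exact key _ _ h x (by simpa using hx)
      · have := key _ _ h x (by simpa [hA i j] using hx)
        simpa only [hP (π.symm i) (π.symm j)] using this
    · intro i j _
      by_cases h : P (π.symm i) (π.symm j)
      · right; simp [h]
      · left; simp [h]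
    · intro i k j hik hkj
      simp only [Equiv.symm_apply_apply]
      apply mono
      rintro ⟨p, q, h1, h2, h3, h4, h5⟩
      exact ⟨p, q, h1, h1.trans hik, h3, hkj.trans h4, h5⟩
    · intro i k j hik hkj
      simp only [Equiv.symm_apply_apply]
      apply mono
      rintro ⟨p, q, h1, h2, h3, h4, h5⟩
      exact ⟨p, q, h1.trans hik, h2, hkj.trans h4, h4, h5⟩
  · rintro ⟨B, ⟨_, hB⟩, _, π, hr, hc⟩
    refine ⟨π, ?_⟩
    intro i k l j hik hkl hlj x y hx hy
    rw [← hB _ _ x hx, ← hB _ _ y hy]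
    exact (hr i l j (hik.trans hkl) hlj).trans (hc i k l hik hkl)
end
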